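/- Let n be a positive integer, η ∈ [0, 1/2], and let f, g : {0,1}^n → ℝ be nonnegative functions. Let u be uniformly distributed on {0,1}^n and let z ∈ {0,1}^n be η-biased (each bit independently 1 with probability η), independent of u. Then E_{u,z}[f(u)·g(u⊕z)] ≤ (E_u[f(u)^{2−2η}])^{1/(2−2η)} · (E_u[g(u)^{2−2η}])^{1/(2−2η)}, where ⊕ is bitwise XOR. -/

import Mathlib

open scoped Classical
open Finset

/-- Bitwise XOR of two strings in `{0,1}^n`. -/
def sxor {n : ℕ} (w w' : Fin n → Bool) : Fin n → Bool := fun j => xor (w j) (w' j)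

/-- Hamming weight of a string in `{0,1}^n`. -/
def wt {n : ℕ} (z : Fin n → Bool) : ℕ := (Finset.univ.filter fun j => z j = true).card

/-- Derivative estimate. -/
lemma aux_phi (r : ℝ) (h0 : 0 ≤ r) (h1 : r ≤ 1) (y : ℝ) (hy0 : 0 ≤ y) (hy1 : y ≤ 1) :
    2 * r * y ≤ (1 + y) ^ r - (1 - y) ^ r := by
  have hmono : MonotoneOn (fun y : ℝ => (1 + y) ^ r - (1 - y) ^ r - 2 * r * y) (Set.Icc 0 1) := by
    apply monotoneOn_of_hasDerivWithinAt_nonneg (convex_Icc 0 1)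
      (f' := fun y => (1 * r * (1 + y) ^ (r - 1)) - ((-1) * r * (1 - y) ^ (r - 1)) - 2 * r)
    · apply Continuous.continuousOn
      have a1 : Continuous fun y : ℝ => (1 + y) ^ r :=
        (Real.continuous_rpow_const h0).comp (by fun_prop)
      have a2 : Continuous fun y : ℝ => (1 - y) ^ r :=
        (Real.continuous_rpow_const h0).comp (by fun_prop)
      fun_prop
    · intro x hx
      rw [interior_Icc] at hx
      apply HasDerivAt.hasDerivWithinAt
      have a1 : HasDerivAt (fun y : ℝ => 1 + y) 1 x := (hasDerivAt_id x).const_add 1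
      have a2 : HasDerivAt (fun y : ℝ => 1 - y) (-1) x := (hasDerivAt_id x).const_sub 1
      have a3 : HasDerivAt (fun y : ℝ => 2 * r * y) (2 * r) x := by
        simpa using (hasDerivAt_id x).const_mul (2 * r)
      exact ((a1.rpow_const (Or.inl (by linarith [hx.1]))).sub
        (a2.rpow_const (Or.inl (by linarith [hx.2])))).sub a3
    · intro x hx
      rw [interior_Icc] at hx
      have p1 : 0 < 1 + x := by linarith [hx.1]
      have p2 : 0 < 1 - x := by linarith [hx.2]
      have A := Real.rpow_pos_of_pos p1 (r - 1)
      have B := Real.rpow_pos_of_pos p2 (r - 1)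
      have AB : 1 ≤ (1 + x) ^ (r - 1) * (1 - x) ^ (r - 1) := by
        rw [← Real.mul_rpow p1.le p2.le]
        apply Real.one_le_rpow_of_pos_of_le_one_of_nonpos (by positivity) (by nlinarith [sq_nonneg x])
          (by linarith)
      have : 2 ≤ (1 + x) ^ (r - 1) + (1 - x) ^ (r - 1) := by
        nlinarith [sq_nonneg ((1 + x) ^ (r - 1) - (1 - x) ^ (r - 1))]
      nlinarith
  have := hmono (Set.left_mem_Icc.2 zero_le_one) ⟨hy0, hy1⟩ hy0
  simp at this
  linarith

lemma aux_h (p : ℝ) (h0 : 1 ≤ p) (h1 : p ≤ 2) (y : ℝ) (hy0 : 0 ≤ y) (hy1 : y ≤ 1) :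
    2 + p * (p - 1) * y ^ 2 ≤ (1 + y) ^ p + (1 - y) ^ p := by
  have hmono : MonotoneOn (fun y : ℝ => (1 + y) ^ p + (1 - y) ^ p - p * (p - 1) * y ^ 2)
      (Set.Icc 0 1) := by
    apply monotoneOn_of_hasDerivWithinAt_nonneg (convex_Icc 0 1)
      (f' := fun y => (1 * p * (1 + y) ^ (p - 1)) + ((-1) * p * (1 - y) ^ (p - 1))
        - p * (p - 1) * (2 * y))
    · apply Continuous.continuousOn
      have a1 : Continuous fun y : ℝ => (1 + y) ^ p :=
        (Real.continuous_rpow_const (by linarith)).comp (by fun_prop)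
      have a2 : Continuous fun y : ℝ => (1 - y) ^ p :=
        (Real.continuous_rpow_const (by linarith)).comp (by fun_prop)
      fun_prop
    · intro x hx
      rw [interior_Icc] at hx
      apply HasDerivAt.hasDerivWithinAt
      have a1 : HasDerivAt (fun y : ℝ => 1 + y) 1 x := (hasDerivAt_id x).const_add 1
      have a2 : HasDerivAt (fun y : ℝ => 1 - y) (-1) x := (hasDerivAt_id x).const_sub 1
      have a3 : HasDerivAt (fun y : ℝ => p * (p - 1) * y ^ 2) (p * (p - 1) * (2 * x)) x := by
        simpa using (hasDerivAt_pow 2 x).const_mul (p * (p - 1))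
      exact ((a1.rpow_const (Or.inl (by linarith [hx.1]))).add
        (a2.rpow_const (Or.inl (by linarith [hx.2])))).sub a3
    · intro x hx
      rw [interior_Icc] at hx
      have := aux_phi (p - 1) (by linarith) (by linarith) x hx.1.le hx.2.le
      nlinarith
  have := hmono (Set.left_mem_Icc.2 zero_le_one) ⟨hy0, hy1⟩ hy0
  simp at this
  linarith

/-- Normalised two-point inequality. -/
lemma aux_two (p : ℝ) (h0 : 1 ≤ p) (h1 : p ≤ 2) (y : ℝ) (hy0 : 0 ≤ y) (hy1 : y ≤ 1) :
    (1 + (p - 1) * y ^ 2) ^ (p / 2) ≤ ((1 + y) ^ p + (1 - y) ^ p) / 2 := by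
  have q : 0 ≤ (p - 1) * y ^ 2 := mul_nonneg (by linarith) (sq_nonneg y)
  have := rpow_one_add_le_one_add_mul_self (s := (p - 1) * y ^ 2) (p := p / 2)
    (by linarith) (by linarith) (by linarith)
  have := aux_h p h0 h1 y hy0 hy1
  nlinarith

/-- The normalised `p`-norm on two points dominates the quadratic form. -/
lemma aux_norm_of_le (p : ℝ) (h0 : 1 ≤ p) (h1 : p ≤ 2) (a b : ℝ) (hb : 0 ≤ b) (hab : b ≤ a) :
    √(((a + b) / 2) ^ 2 + (p - 1) * ((a - b) / 2) ^ 2) ≤ ((a ^ p + b ^ p) / 2) ^ (1 / p) := by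
  have ha : 0 ≤ a := hb.trans hab
  rcases eq_or_lt_of_le (show 0 ≤ (a + b) / 2 by linarith) with hx | hx
  · have : a = 0 := by linarith
    have : b = 0 := by linarith
    subst a b
    simp
    positivity
  set x := (a + b) / 2 with hxd
  set y := (a - b) / 2 / x with hyd
  have hyx : (a - b) / 2 = x * y := by rw [hyd]; field_simp
  have hy0 : 0 ≤ y := div_nonneg (by linarith) hx.le
  have hy1 : y ≤ 1 := by rw [hyd, div_le_one hx]; linarith
  have e1 : a = x * (1 + y) := by linarith
  have e2 : b = x * (1 - y) := by linarith
  have key := aux_two p h0 h1 y hy0 hy1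
  have q : 0 ≤ (p - 1) * y ^ 2 := mul_nonneg (by linarith) (sq_nonneg y)
  have hp : p ≠ 0 := by linarith
  have hE : x ^ 2 + (p - 1) * (x * y) ^ 2 = x ^ 2 * (1 + (p - 1) * y ^ 2) := by ring
  have hs : √(x ^ 2 + (p - 1) * (x * y) ^ 2) ^ p = x ^ p * (1 + (p - 1) * y ^ 2) ^ (p / 2) := by
    rw [hE, Real.sqrt_mul (sq_nonneg x), Real.sqrt_sq hx.le, Real.mul_rpow hx.le (Real.sqrt_nonneg _),
      Real.sqrt_eq_rpow, ← Real.rpow_mul (by linarith)]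
    congr 2
    ring
  rw [hyx, one_div, Real.le_rpow_inv_iff_of_pos (Real.sqrt_nonneg _) (by positivity) (by linarith), hs,
    e1, e2, Real.mul_rpow hx.le (by linarith), Real.mul_rpow hx.le (by linarith)]
  have := Real.rpow_pos_of_pos hx p
  nlinarith

lemma aux_norm (p : ℝ) (h0 : 1 ≤ p) (h1 : p ≤ 2) (a b : ℝ) (ha : 0 ≤ a) (hb : 0 ≤ b) :
    √(((a + b) / 2) ^ 2 + (p - 1) * ((a - b) / 2) ^ 2) ≤ ((a ^ p + b ^ p) / 2) ^ (1 / p) := by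
  rcases le_total b a with h | h
  · exact aux_norm_of_le p h0 h1 a b hb h
  · have := aux_norm_of_le p h0 h1 b a ha h
    rw [add_comm (a ^ p), add_comm a, show ((a - b) / 2) ^ 2 = ((b - a) / 2) ^ 2 by ring]
    exact this

/-- The case of one coordinate. -/
lemma aux_one (η : ℝ) (hη0 : 0 ≤ η) (hη1 : η ≤ 1 / 2) (a b c d : ℝ)
    (ha : 0 ≤ a) (hb : 0 ≤ b) (hc : 0 ≤ c) (hd : 0 ≤ d) :
    ((1 - η) * (a * c + b * d) + η * (a * d + b * c)) / 2 ≤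
      ((a ^ (2 - 2 * η) + b ^ (2 - 2 * η)) / 2) ^ (1 / (2 - 2 * η)) *
      ((c ^ (2 - 2 * η) + d ^ (2 - 2 * η)) / 2) ^ (1 / (2 - 2 * η)) := by
  have A := aux_norm (2 - 2 * η) (by linarith) (by linarith) a b ha hb
  have C := aux_norm (2 - 2 * η) (by linarith) (by linarith) c d hc hd
  refine le_trans ?_ (mul_le_mul A C (Real.sqrt_nonneg _) (le_trans (Real.sqrt_nonneg _) A))
  have hr : 0 ≤ 2 - 2 * η - 1 := by linarith
  rw [← Real.sqrt_mul (by positivity)]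
  apply Real.le_sqrt_of_sq_le
  have := mul_nonneg hr (sq_nonneg ((a + b) / 2 * ((c - d) / 2) - (c + d) / 2 * ((a - b) / 2)))
  linear_combination this

/-- Product form of the noise weight. -/
lemma aux_weight {n : ℕ} (η : ℝ) (z : Fin n → Bool) :
    η ^ (wt z) * (1 - η) ^ (n - wt z) = ∏ i, (if z i = true then η else 1 - η) := by
  rw [Finset.prod_ite, Finset.prod_const, Finset.prod_const]
  have h := Finset.card_filter_add_card_filter_not (s := (Finset.univ : Finset (Fin n)))
    (fun j => z j = true)
  rw [Finset.card_univ, Fintype.card_fin] at h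
  unfold wt
  congr 2
  omega

lemma aux_sum_cons {n : ℕ} (F : (Fin (n + 1) → Bool) → ℝ) :
    ∑ u, F u = (∑ u : Fin n → Bool, F (Fin.cons true u)) +
      ∑ u : Fin n → Bool, F (Fin.cons false u) := by
  rw [← (Fin.consEquiv (fun _ : Fin (n + 1) => Bool)).sum_comp, Fintype.sum_prod_type]
  simp [Fin.consEquiv]

lemma aux_sxor_cons {n : ℕ} (a b : Bool) (u z : Fin n → Bool) :
    sxor (Fin.cons a u : Fin (n + 1) → Bool) (Fin.cons b z) = Fin.cons (xor a b) (sxor u z) := by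
  funext j
  refine Fin.cases ?_ (fun j => ?_) j <;> simp [sxor]

lemma aux_main (η : ℝ) (hη0 : 0 ≤ η) (hη1 : η ≤ 1 / 2) (n : ℕ) :
    ∀ (f g : (Fin n → Bool) → ℝ) (_ : ∀ u, 0 ≤ f u) (_ : ∀ u, 0 ≤ g u),
    (∑ u : Fin n → Bool, ∑ z : Fin n → Bool,
        (∏ i, (if z i = true then η else 1 - η)) * (f u * g (sxor u z))) / (2 : ℝ) ^ n
      ≤ ((∑ u : Fin n → Bool, f u ^ (2 - 2 * η)) / (2 : ℝ) ^ n) ^ (1 / (2 - 2 * η))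
        * ((∑ u : Fin n → Bool, g u ^ (2 - 2 * η)) / (2 : ℝ) ^ n) ^ (1 / (2 - 2 * η)) := by
  have hp : 2 - 2 * η ≠ 0 := by linarith
  induction n with
  | zero =>
    intro f g hf hg
    simp only [Fintype.sum_unique, Finset.univ_eq_empty, Finset.prod_empty, pow_zero, div_one, one_mul]
    rw [one_div, Real.rpow_rpow_inv (hf _) hp, Real.rpow_rpow_inv (hg _) hp]
    exact le_of_eq (congrArg (fun v => f _ * g v) (Subsingleton.elim _ _))
  | succ n ih =>
    intro f g hf hg
    have hN : ∀ h : (Fin n → Bool) → ℝ, (∀ u, 0 ≤ h u) →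
        0 ≤ (∑ u : Fin n → Bool, h u ^ (2 - 2 * η)) / (2 : ℝ) ^ n := fun h hh =>
      div_nonneg (Finset.sum_nonneg fun u _ => Real.rpow_nonneg (hh u) _) (by positivity)
    have I := fun a b : Bool => ih (fun u => f (Fin.cons a u)) (fun u => g (Fin.cons b u))
      (fun _ => hf _) (fun _ => hg _)
    have NF := fun a : Bool => hN (fun u => f (Fin.cons a u)) (fun _ => hf _)
    have NG := fun a : Bool => hN (fun u => g (Fin.cons a u)) (fun _ => hg _)
    have key := aux_one η hη0 hη1 _ _ _ _
      (Real.rpow_nonneg (NF true) (1 / (2 - 2 * η))) (Real.rpow_nonneg (NF false) (1 / (2 - 2 * η)))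
      (Real.rpow_nonneg (NG true) (1 / (2 - 2 * η))) (Real.rpow_nonneg (NG false) (1 / (2 - 2 * η)))
    have hpw : ∀ x : ℝ, 0 ≤ x → (x ^ (1 / (2 - 2 * η))) ^ (2 - 2 * η) = x := fun x hx => by
      rw [one_div, Real.rpow_inv_rpow hx hp]
    rw [hpw _ (NF true), hpw _ (NF false), hpw _ (NG true), hpw _ (NG false)] at key
    rw [aux_sum_cons (fun u => f u ^ (2 - 2 * η)), aux_sum_cons (fun u => g u ^ (2 - 2 * η))]
    have hdiv : ∀ x y : ℝ, (x + y) / 2 ^ (n + 1) = (x / 2 ^ n + y / 2 ^ n) / 2 := fun x y => by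
      rw [pow_succ]; field_simp
    rw [hdiv, hdiv]
    refine le_trans ?_ key
    rw [aux_sum_cons]
    simp only [aux_sum_cons (n := n), aux_sxor_cons, Fin.prod_univ_succ, Fin.cons_zero, Fin.cons_succ,
      if_true, Bool.xor_true, Bool.xor_false, Bool.not_true, Bool.not_false, Bool.false_eq_true,
      if_false, mul_assoc, ← Finset.mul_sum, Finset.sum_add_distrib]
    have h1 : 0 ≤ 1 - η := by linarith
    have J1 := mul_le_mul_of_nonneg_left (I true true) h1
    have J2 := mul_le_mul_of_nonneg_left (I false false) h1
    have J3 := mul_le_mul_of_nonneg_left (I true false) hη0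
    have J4 := mul_le_mul_of_nonneg_left (I false true) hη0
    rw [hdiv]
    simp only [add_div, mul_div_assoc]
    linarith

/-- For nonnegative `f, g : {0,1}^n → ℝ`, `u` uniform and `z`
`η`-biased (each bit independently `1` with probability `η`), independent of `u`,
`E_{u,z}[f(u)·g(u⊕z)] ≤ (E_u[f^{2−2η}])^{1/(2−2η)} · (E_u[g^{2−2η}])^{1/(2−2η)}`
(a consequence of the Bonami–Beckner hypercontractive inequality). -/
theorem noise_correlation_hypercontractive_bound
    (n : ℕ) (η : ℝ) (hη0 : 0 ≤ η) (hη1 : η ≤ 1 / 2)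
    (f g : (Fin n → Bool) → ℝ) (hf : ∀ u, 0 ≤ f u) (hg : ∀ u, 0 ≤ g u) :
    (∑ u : Fin n → Bool, ∑ z : Fin n → Bool,
        η ^ (wt z) * (1 - η) ^ (n - wt z) * (f u * g (sxor u z))) / (2 : ℝ) ^ n
      ≤ ((∑ u : Fin n → Bool, f u ^ (2 - 2 * η)) / (2 : ℝ) ^ n) ^ (1 / (2 - 2 * η))
        * ((∑ u : Fin n → Bool, g u ^ (2 - 2 * η)) / (2 : ℝ) ^ n) ^ (1 / (2 - 2 * η)) := by
  simp only [aux_weight]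
  exact aux_main η hη0 hη1 n f g hf hg
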